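/- arXiv:0906.0818 — 2 statements merged into one kernel-verified Lean document; each statement's English description precedes it below -/
import Mathlib

section
/- Let R be a commutative ring of prime characteristic p, let M be a sub-R-module of the module Der(R) of derivations that is closed under the Lie bracket, and let q : Der(R) → Der(R)/M be the quotient map. Then the map φ : M → Der(R)/M sending D to q(D^p) is p-semilinear, i.e. φ(D+E) = φ(D) + φ(E) and φ(f·D) = f^p·φ(D) for all f ∈ R and D, E ∈ M. -/
/-! In characteristic `p`, left and right multiplication by `a` commute, so
`ad (a ^ p) = L_a ^ p - R_a ^ p = (ad a) ^ p`. For a derivation `δ` of a possibly noncommutative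
algebra, viewed as an operator with `⁅δ, L_a⁆ = L_{δ a}`, this gives `⁅δ ^ p, L_a⁆ = L_{δ ^ p a}`,
so `δ ^ p` is a derivation; read with the roles of `δ` and `L_a` exchanged, it gives
`δ (a ^ p) = (ad a) ^ (p - 1) (δ a)`. Taking `δ = d/dX` and `a = x X + y` shows that the middle
coefficients of `(x X + y) ^ p` are Lie polynomials in `x` and `y`, which is Jacobson's formula
and hence additivity modulo `M`.

For the scalar rule, `G = (f D) ^ p - f ^ p D ^ p - g D` is a derivation and a combination of
`1, D, …, D ^ (p - 1)`. If `D x = 1` and `g` is chosen with `G x = 0`, then `G` kills every power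
of `x`, and triangularity of the values `D ^ k (x ^ m)` forces `G = 0`. Such an `x` becomes
available in `R[X]`, with `D` extended by `D X = 1`. -/

open Finset Polynomial

section AssociativeAlgebra

attribute [local instance] LieRing.ofAssociativeRing

variable {K A : Type*} [CommRing K] [Ring A] [Algebra K A] {p : ℕ} [CharP A p]

variable (K A p) in
lemma charP_moduleEnd : CharP (Module.End K A) p :=
  charP_of_injective_ringHom (f := (Algebra.lmul K A).toRingHom) Algebra.lmul_injective p

variable [Fact p.Prime]

lemma ad_pow_char (a : A) : LieAlgebra.ad K A (a ^ p) = LieAlgebra.ad K A a ^ p := by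
  have := charP_moduleEnd K A p
  simp only [LieAlgebra.ad_eq_lmul_left_sub_lmul_right, Pi.sub_apply]
  rw [sub_pow_char_of_commute p (LinearMap.commute_mulLeft_right a a), LinearMap.pow_mulLeft,
    LinearMap.pow_mulRight]

lemma lie_pow_char_lmul {δ : Module.End K A}
    (hδ : ∀ a, ⁅δ, Algebra.lmul K A a⁆ = Algebra.lmul K A (δ a)) (a : A) :
    ⁅δ ^ p, Algebra.lmul K A a⁆ = Algebra.lmul K A ((δ ^ p) a) := by
  have := charP_moduleEnd K A p
  rw [← LieAlgebra.ad_apply (R := K), ad_pow_char]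
  exact LinearMap.congr_fun (Module.End.commute_pow_left_of_commute
    (f := (Algebra.lmul K A).toLinearMap) (LinearMap.ext hδ) p) a

lemma apply_pow_char_eq_ad_pow_apply {δ : Module.End K A}
    (hδ : ∀ a, ⁅δ, Algebra.lmul K A a⁆ = Algebra.lmul K A (δ a)) (a : A) :
    δ (a ^ p) = (LieAlgebra.ad K A a ^ (p - 1)) (δ a) := by
  have := charP_moduleEnd K A p
  have hp : p - 1 + 1 = p := Nat.sub_add_cancel (Fact.out : p.Prime).one_le
  have ad_lmul : LieAlgebra.ad K _ (Algebra.lmul K A a) ∘ₗ (Algebra.lmul K A).toLinearMap =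
      (Algebra.lmul K A).toLinearMap ∘ₗ LieAlgebra.ad K A a :=
    LinearMap.ext fun b ↦ ((Algebra.lmul K A).toLieHom.map_lie a b).symm
  apply Algebra.lmul_injective (R := K)
  calc Algebra.lmul K A (δ (a ^ p))
      = -LieAlgebra.ad K _ (Algebra.lmul K A a ^ p) δ := by
        rw [← hδ, map_pow, LieAlgebra.ad_apply, lie_skew]
    _ = (LieAlgebra.ad K _ (Algebra.lmul K A a) ^ (p - 1)) (Algebra.lmul K A (δ a)) := by
        rw [ad_pow_char, ← hp, pow_succ, Module.End.mul_apply, LieAlgebra.ad_apply, ← map_neg,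
          lie_skew, hδ, Nat.add_sub_cancel]
    _ = Algebra.lmul K A ((LieAlgebra.ad K A a ^ (p - 1)) (δ a)) :=
        LinearMap.congr_fun (Module.End.commute_pow_left_of_commute ad_lmul (p - 1)) (δ a)

end AssociativeAlgebra

section Jacobson

attribute [local instance] LieRing.ofAssociativeRing

variable {K A : Type*} [CommRing K] [Ring A] [Algebra K A] {p : ℕ}

lemma derivative_pow_char [CharP A p] [Fact p.Prime] (a : A[X]) :
    derivative (a ^ p) = (LieAlgebra.ad ℤ A[X] a ^ (p - 1)) (derivative a) := by
  refine apply_pow_char_eq_ad_pow_apply (δ := derivative.restrictScalars ℤ) (fun b ↦ ?_) a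
  ext1 c
  simp [Ring.lie_def, derivative_mul]

lemma coeff_lie_mem (L : LieSubalgebra K A) {f g : A[X]} (hf : ∀ n, f.coeff n ∈ L)
    (hg : ∀ n, g.coeff n ∈ L) (n : ℕ) : ⁅f, g⁆.coeff n ∈ L := by
  rw [Ring.lie_def, coeff_sub, coeff_mul, coeff_mul,
    ← Nat.sum_antidiagonal_swap (f := fun ij ↦ g.coeff ij.1 * f.coeff ij.2), ← sum_sub_distrib]
  exact sum_mem fun ij _ ↦ L.lie_mem (hf ij.1) (hg ij.2)

lemma coeff_iterate_ad_mem (L : LieSubalgebra K A) {f g : A[X]} (hf : ∀ n, f.coeff n ∈ L)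
    (hg : ∀ n, g.coeff n ∈ L) (m n : ℕ) : ((LieAlgebra.ad ℤ A[X] f ^ m) g).coeff n ∈ L := by
  induction m generalizing n with
  | zero => exact hg n
  | succ m ih =>
    rw [pow_succ', Module.End.mul_apply, LieAlgebra.ad_apply]
    exact coeff_lie_mem L hf ih n

lemma coeff_pow_char_mem [CharP A p] [Fact p.Prime] (L : LieSubalgebra K A) {f : A[X]}
    (hf : ∀ n, f.coeff n ∈ L) {n : ℕ} (hn : ¬ p ∣ n) : (f ^ p).coeff n ∈ L := by
  obtain ⟨k, rfl⟩ := Nat.exists_eq_add_one_of_ne_zero fun h : n = 0 ↦ hn (h ▸ dvd_zero p)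
  have hmem : (k + 1) • (f ^ p).coeff (k + 1) ∈ L := by
    have hder : ∀ n, (derivative f).coeff n ∈ L := fun n ↦ by
      rw [coeff_derivative, ← Nat.cast_succ, ← nsmul_eq_mul']
      exact L.toSubmodule.nsmul_mem (hf _) _
    rw [nsmul_eq_mul', Nat.cast_succ, ← coeff_derivative, derivative_pow_char]
    exact coeff_iterate_ad_mem L hf hder _ _
  have horder : addOrderOf ((f ^ p).coeff (k + 1)) ∣ p :=
    addOrderOf_dvd_iff_nsmul_eq_zero.2 (by rw [nsmul_eq_mul, CharP.cast_eq_zero, zero_mul])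
  have hcop : (k + 1).Coprime p := ((Fact.out : p.Prime).coprime_iff_not_dvd.2 hn).symm
  obtain ⟨m, hm⟩ := exists_nsmul_eq_self_of_coprime (hcop.of_dvd_right horder)
  rw [← hm]
  exact L.toSubmodule.nsmul_mem hmem m

lemma add_pow_eq_sum_coeff (x y : A) (n : ℕ) :
    (x + y) ^ n = ∑ k ∈ range (n + 1), ((C x * X + C y) ^ n).coeff k := by
  let ev : A[X] →+* A := eval₂RingHom' (RingHom.id A) 1 Commute.one_right
  have hdeg : ((C x * X + C y) ^ n).natDegree < n + 1 :=
    Nat.lt_succ_of_le ((natDegree_pow_le_of_le n natDegree_linear_le).trans_eq (mul_one n))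
  have hev : ev ((C x * X + C y) ^ n) = (x + y) ^ n := by
    rw [map_pow]
    simp [ev, eval₂RingHom']
  rw [← hev]
  exact (eval₂_eq_sum_range' _ hdeg 1).trans (by simp)

theorem add_pow_char_sub_pow_sub_pow_mem [CharP A p] [hp : Fact p.Prime] (L : LieSubalgebra K A)
    {x y : A} (hx : x ∈ L) (hy : y ∈ L) : (x + y) ^ p - x ^ p - y ^ p ∈ L := by
  set f : A[X] := C x * X + C y with hf
  have hbot : (f ^ p).coeff 0 = y ^ p := by
    rw [← constantCoeff_apply, map_pow]
    simp [hf]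
  have htop : (f ^ p).coeff p = x ^ p := by
    simpa [hf] using coeff_pow_of_natDegree_le (m := p) (natDegree_linear_le (a := x) (b := y))
  have hfL (n : ℕ) : f.coeff n ∈ L := by
    rcases n with _ | _ | n <;> simp [hf, hx, hy, coeff_X, coeff_C]
  have hmid : ∑ k ∈ range (p - 1), (f ^ p).coeff (k + 1) ∈ L :=
    sum_mem fun k hk ↦ coeff_pow_char_mem L hfL
      (Nat.not_dvd_of_pos_of_lt k.succ_pos (by have := mem_range.1 hk; omega))
  have hsplit : (x + y) ^ p = ∑ k ∈ range (p - 1), (f ^ p).coeff (k + 1) + y ^ p + x ^ p := by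
    rw [add_pow_eq_sum_coeff, sum_range_succ, ← hf, htop, ← hbot,
      ← sum_range_succ' (fun k ↦ (f ^ p).coeff k), Nat.sub_add_cancel hp.out.one_le]
  rwa [hsplit, add_sub_cancel_right, add_sub_cancel_right]

end Jacobson

section Derivation

variable {K R : Type*} [CommRing K] [CommRing R] [Algebra K R]

lemma lie_coe_lmul (D : Derivation K R R) (a : R) :
    ⁅(D : Module.End K R), Algebra.lmul K R a⁆ = Algebra.lmul K R (D a) := by
  ext b
  simp [Ring.lie_def, mul_comm]

section CharPow

attribute [local instance] LieRing.ofAssociativeRing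

variable (p : ℕ) [hp : Fact p.Prime] [CharP R p]

/-- The `p`-fold composite `D ^ p` of a derivation in characteristic `p`, as a derivation. -/
def charPow (D : Derivation K R R) : Derivation K R R :=
  .mk' ((D : Module.End K R) ^ p) fun a b ↦ by
    have h := LinearMap.congr_fun (lie_pow_char_lmul (p := p) (lie_coe_lmul D) a) b
    rw [Ring.lie_def, LinearMap.sub_apply, sub_eq_iff_eq_add'] at h
    simpa [mul_comm b] using h

lemma charPow_apply (D : Derivation K R R) (a : R) : charPow p D a = D^[p] a :=
  Module.End.pow_apply ..

lemma charPow_add_sub_mem (L : LieSubalgebra K (Derivation K R R)) {D E : Derivation K R R}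
    (hD : D ∈ L) (hE : E ∈ L) :
    charPow p (D + E) - charPow p D - charPow p E ∈ L := by
  have := charP_moduleEnd K R p
  have coe_mem {F : Derivation K R R} (hF : F ∈ L) :
      (F : Module.End K R) ∈ L.map (LieModule.toEnd K (Derivation K R R) R) := ⟨F, hF, rfl⟩
  obtain ⟨F, hF, hFeq⟩ := add_pow_char_sub_pow_sub_pow_mem (p := p) _ (coe_mem hD) (coe_mem hE)
  convert! hF
  ext a
  exact (LinearMap.congr_fun hFeq a).symm

end CharPow

section Hochschild

/-- The `R`-module of differential operators spanned by the powers `D ^ k` with `k < n`. -/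
def iteratesSpan (D : Derivation K R R) (n : ℕ) : Submodule R (Module.End K R) :=
  Submodule.span R ((fun k ↦ (D : Module.End K R) ^ k) '' range n)

lemma pow_mem_iteratesSpan (D : Derivation K R R) {k n : ℕ} (hk : k < n) :
    (D : Module.End K R) ^ k ∈ iteratesSpan D n :=
  Submodule.subset_span ⟨k, mem_coe.2 (mem_range.2 hk), rfl⟩

lemma iteratesSpan_mono (D : Derivation K R R) : Monotone (iteratesSpan D) := fun _ _ h ↦
  Submodule.span_mono (Set.image_mono (coe_subset.2 (range_mono h)))

lemma coe_mul_smul (D : Derivation K R R) (c : R) (T : Module.End K R) :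
    (D : Module.End K R) * c • T = c • ((D : Module.End K R) * T) + D c • T := by
  ext a
  simp [mul_comm]

lemma coe_mul_mem_iteratesSpan (D : Derivation K R R) {n : ℕ} {T : Module.End K R}
    (hT : T ∈ iteratesSpan D n) : (D : Module.End K R) * T ∈ iteratesSpan D (n + 1) := by
  induction hT using Submodule.span_induction with
  | mem T hT =>
    obtain ⟨k, hk, rfl⟩ := hT
    rw [← pow_succ']
    exact pow_mem_iteratesSpan D (Nat.succ_lt_succ (mem_range.1 hk))
  | zero => simp
  | add T U _ _ hT hU => rw [mul_add]; exact add_mem hT hU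
  | smul c T hT' hT =>
    rw [coe_mul_smul]
    exact add_mem (Submodule.smul_mem _ _ hT)
      (Submodule.smul_mem _ _ (iteratesSpan_mono D n.le_succ hT'))

lemma smul_pow_sub_mem_iteratesSpan (D : Derivation K R R) (f : R) (n : ℕ) :
    ((f • D : Derivation K R R) : Module.End K R) ^ n - f ^ n • (D : Module.End K R) ^ n ∈
      iteratesSpan D n := by
  induction n with
  | zero => simp
  | succ n ih =>
    set W := ((f • D : Derivation K R R) : Module.End K R) ^ n - f ^ n • (D : Module.End K R) ^ n
      with hW
    have hstep : ((f • D : Derivation K R R) : Module.End K R) ^ (n + 1) -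
        f ^ (n + 1) • (D : Module.End K R) ^ (n + 1) =
          f • (D (f ^ n) • (D : Module.End K R) ^ n + (D : Module.End K R) * W) := by
      rw [hW, mul_sub, coe_mul_smul, Derivation.coe_smul_linearMap, pow_succ', pow_succ', pow_succ',
        smul_mul_assoc]
      module
    rw [hstep]
    exact Submodule.smul_mem _ _ (add_mem
      (Submodule.smul_mem _ _ (pow_mem_iteratesSpan D n.lt_succ_self))
      (coe_mul_mem_iteratesSpan D ih))

lemma exists_eq_smul_one_add_mul_of_mem_iteratesSpan_succ (D : Derivation K R R) {n : ℕ}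
    {T : Module.End K R} (hT : T ∈ iteratesSpan D (n + 1)) :
    ∃ c : R, ∃ U ∈ iteratesSpan D n, T = c • 1 + U * (D : Module.End K R) := by
  induction hT using Submodule.span_induction with
  | mem T hT =>
    obtain ⟨k, hk, rfl⟩ := hT
    rcases k with _ | k
    · exact ⟨1, 0, zero_mem _, by simp⟩
    · exact ⟨0, _, pow_mem_iteratesSpan D (Nat.succ_lt_succ_iff.1 (mem_range.1 hk)),
        by simp [pow_succ]⟩
  | zero => exact ⟨0, 0, zero_mem _, by simp⟩
  | add _ _ _ _ hT hU =>
    obtain ⟨c, T, hT, rfl⟩ := hT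
    obtain ⟨d, U, hU, rfl⟩ := hU
    exact ⟨c + d, T + U, add_mem hT hU, by rw [add_mul]; module⟩
  | smul r _ _ hT =>
    obtain ⟨c, T, hT, rfl⟩ := hT
    exact ⟨r * c, r • T, Submodule.smul_mem _ _ hT, by rw [smul_mul_assoc]; module⟩

lemma eq_zero_of_mem_iteratesSpan {D : Derivation K R R} {x : R} (hx : D x = 1) {n : ℕ}
    (hn : ∀ m < n, m ≠ 0 → IsUnit (m : R)) {T : Module.End K R} (hT : T ∈ iteratesSpan D n)
    (hTx : ∀ m < n, T (x ^ m) = 0) : T = 0 := by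
  induction n generalizing T with
  | zero => simpa [iteratesSpan] using hT
  | succ n ih =>
    obtain ⟨c, U, hU, rfl⟩ := exists_eq_smul_one_add_mul_of_mem_iteratesSpan_succ D hT
    have hc : c = 0 := by simpa using hTx 0 n.succ_pos
    have hUx (m : ℕ) (hm : m < n) : U (x ^ m) = 0 := by
      have hunit : IsUnit ((m + 1 : ℕ) : R) := hn (m + 1) (Nat.succ_lt_succ hm) m.succ_ne_zero
      have hpow : D (x ^ (m + 1)) = (m + 1) • x ^ m := by
        rw [Derivation.leibniz_pow, hx, Nat.add_sub_cancel, smul_eq_mul, mul_one]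
      have h := hTx (m + 1) (Nat.succ_lt_succ hm)
      rw [hc, zero_smul, zero_add, Module.End.mul_apply, Derivation.coeFn_coe, hpow, map_nsmul,
        nsmul_eq_mul] at h
      exact hunit.mul_right_eq_zero.1 h
    rw [hc, ih (fun m hm ↦ hn m (hm.trans n.lt_succ_self)) hU hUx, zero_smul, zero_mul, add_zero]

variable (p : ℕ) [hp : Fact p.Prime] [CharP R p]

lemma charPow_smul_of_apply_eq_one {D : Derivation K R R} {x : R} (hx : D x = 1) (f : R) :
    charPow p (f • D) = f ^ p • charPow p D + ((f • D)^[p - 1] f) • D := by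
  set G := charPow p (f • D) - f ^ p • charPow p D - ((f • D)^[p - 1] f) • D with hG
  have hDx : D^[p] x = 0 := by
    rw [← Nat.sub_add_cancel hp.out.two_le, Function.iterate_add_apply]
    simp [hx, iterate_map_zero]
  have hFx : (f • D)^[p] x = (f • D)^[p - 1] f := by
    nth_rw 1 [← Nat.sub_add_cancel hp.out.one_le]
    simp [hx]
  have hGx : G x = 0 := by
    simp only [hG, Derivation.sub_apply, Derivation.smul_apply, charPow_apply, hDx, hFx, hx,
      smul_eq_mul, mul_zero, mul_one, sub_zero, sub_self]
  have hGspan : (G : Module.End K R) ∈ iteratesSpan D p := by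
    have hD : (D : Module.End K R) ∈ iteratesSpan D p := by
      simpa using pow_mem_iteratesSpan D hp.out.one_lt
    exact sub_mem (smul_pow_sub_mem_iteratesSpan D f p) (Submodule.smul_mem _ _ hD)
  have hunit (m : ℕ) (hm : m < p) (hm0 : m ≠ 0) : IsUnit (m : R) :=
    (CharP.isUnit_natCast_iff hp.out).2 (Nat.not_dvd_of_pos_of_lt (Nat.pos_of_ne_zero hm0) hm)
  have hG0 : (G : Module.End K R) = 0 :=
    eq_zero_of_mem_iteratesSpan hx hunit hGspan fun m _ ↦ by simp [hGx]
  rw [← sub_eq_zero, ← sub_sub]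
  exact Derivation.ext (LinearMap.congr_fun hG0)

/-- The extension of a derivation of `R` to `R[X]` by `X ↦ 1`. -/
noncomputable def polynomialExtension (D : Derivation K R R) : Derivation K R[X] R[X] :=
  PolynomialModule.equivPolynomialSelf.toLinearMap.compDer D.mapCoeffs +
    derivative'.restrictScalars K

lemma polynomialExtension_C (D : Derivation K R R) (a : R) :
    polynomialExtension D (C a) = C (D a) := by
  simp [polynomialExtension]

lemma polynomialExtension_X (D : Derivation K R R) : polynomialExtension D X = 1 := by
  simp [polynomialExtension]

theorem charPow_smul (D : Derivation K R R) (f : R) :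
    charPow p (f • D) = f ^ p • charPow p D + ((f • D)^[p - 1] f) • D := by
  have hE := Function.Semiconj.iterate_right (f := C) (fun a ↦ (polynomialExtension_C D a).symm)
  have hF := Function.Semiconj.iterate_right (f := C) (ga := f • D)
    (gb := C f • polynomialExtension D) (fun a ↦ by simp [polynomialExtension_C])
  ext a
  apply C_injective
  have h := DFunLike.congr_fun
    (charPow_smul_of_apply_eq_one p (polynomialExtension_X D) (C f)) (C a)
  simpa [charPow_apply, ← (hE _).eq, ← (hF _).eq, polynomialExtension_C] using h

end Hochschild

/-- The `p`-semilinear map `D ↦ q (D ^ p)` from `M` to `Der(R) / M`; semilinearity is encoded as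
linearity over the Frobenius endomorphism. -/
def charPowMkQ (p : ℕ) [Fact p.Prime] [CharP R p] (M : Submodule R (Derivation K R R))
    (hM : ∀ D ∈ M, ∀ E ∈ M, ⁅D, E⁆ ∈ M) : M →ₛₗ[frobenius R p] Derivation K R R ⧸ M where
  toFun D := M.mkQ (charPow p D)
  map_add' D E := by
    let L : LieSubalgebra K (Derivation K R R) :=
      { M.restrictScalars K with lie_mem' := fun hD hE ↦ hM _ hD _ hE }
    rw [← map_add, M.mkQ_apply, M.mkQ_apply, Submodule.Quotient.eq, ← sub_sub]
    exact charPow_add_sub_mem p L D.2 E.2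
  map_smul' f D := by
    rw [Submodule.coe_smul, charPow_smul, map_add, map_smul, frobenius_def, add_eq_left,
      M.mkQ_apply, Submodule.Quotient.mk_eq_zero]
    exact M.smul_mem _ D.2

end Derivation

theorem stmt_1_general {K R : Type*} [CommRing K] [CommRing R] [Algebra K R] (p : ℕ)
    (hp : p.Prime) [CharP R p] (M : Submodule R (Derivation K R R))
    (hbr : ∀ D ∈ M, ∀ E ∈ M,
      ∃ C : Derivation K R R, (∀ a : R, C a = D (E a) - E (D a)) ∧ C ∈ M)
    (pow : Derivation K R R → Derivation K R R)
    (hpow : ∀ (D : Derivation K R R) (a : R), pow D a = (⇑D)^[p] a) :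
    (∀ D ∈ M, ∀ E ∈ M,
      (Submodule.Quotient.mk (pow (D + E)) : Derivation K R R ⧸ M) =
        Submodule.Quotient.mk (pow D) + Submodule.Quotient.mk (pow E)) ∧
    (∀ (f : R), ∀ D ∈ M,
      (Submodule.Quotient.mk (pow (f • D)) : Derivation K R R ⧸ M) =
        f ^ p • (Submodule.Quotient.mk (pow D) : Derivation K R R ⧸ M)) := by
  have : Fact p.Prime := ⟨hp⟩
  obtain rfl : pow = charPow p :=
    funext fun D ↦ Derivation.ext fun a ↦ (hpow D a).trans (charPow_apply p D a).symm
  have hM : ∀ D ∈ M, ∀ E ∈ M, ⁅D, E⁆ ∈ M := by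
    intro D hD E hE
    obtain ⟨B, hB, hBM⟩ := hbr D hD E hE
    rwa [show ⁅D, E⁆ = B from Derivation.ext fun a ↦ (hB a).symm]
  exact ⟨fun D hD E hE ↦ map_add (charPowMkQ p M hM) ⟨D, hD⟩ ⟨E, hE⟩,
    fun f D hD ↦ map_smulₛₗ (charPowMkQ p M hM) f ⟨D, hD⟩⟩

/-- Let `M` be an `R`-submodule of the derivations of `R` (char `p`) closed under the
Lie bracket, and suppose the `p`-th iterate of a derivation is again a derivation
(encoded by `pow`/`hpow`). Then `D ↦ q(D^p)` into `Der(R)/M` is `p`-semilinear: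
additive, and `φ(f • D) = f^p • φ(D)`. -/
theorem stmt_1 {R : Type*} [CommRing R] (p : ℕ) (hp : p.Prime) [CharP R p]
    (M : Submodule R (Derivation ℤ R R))
    (hbr : ∀ D ∈ M, ∀ E ∈ M,
      ∃ C : Derivation ℤ R R, (∀ a : R, C a = D (E a) - E (D a)) ∧ C ∈ M)
    (pow : Derivation ℤ R R → Derivation ℤ R R)
    (hpow : ∀ (D : Derivation ℤ R R) (a : R), pow D a = (⇑D)^[p] a) :
    (∀ D ∈ M, ∀ E ∈ M,
      (Submodule.Quotient.mk (pow (D + E)) : Derivation ℤ R R ⧸ M) =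
        Submodule.Quotient.mk (pow D) + Submodule.Quotient.mk (pow E)) ∧
    (∀ (f : R), ∀ D ∈ M,
      (Submodule.Quotient.mk (pow (f • D)) : Derivation ℤ R R ⧸ M) =
        f ^ p • (Submodule.Quotient.mk (pow D) : Derivation ℤ R R ⧸ M)) := by
  exact stmt_1_general p hp M hbr pow hpow
end

section
/- Let E be a vector bundle on P¹ over an algebraically closed field fitting in a short exact sequence 0 → O^{n-r} → E → ⊕_{i=1}^{r} O(a_i) → 0 with all a_i > 0. Write E ≅ ⊕ O(b_j) by Grothendieck's theorem, and let r' be the number of indices j with b_j > 0. Then either r' > r, or r' = r and the exact sequence splits, i.e. E ≅ O^{n-r} ⊕ (⊕_{i=1}^r O(a_i)). -/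
open MvPolynomial

/-- A bundle map `O(c) → O(d)` on `P¹` is given by a bihomogeneous polynomial of degree
`d - c` in the two homogeneous coordinates; for `d - c < 0` only the zero map exists. -/
def IsHomDeg {k : Type*} [CommSemiring k] (d : ℤ) (f : MvPolynomial (Fin 2) k) : Prop :=
  (0 ≤ d → f.IsHomogeneous d.toNat) ∧ (d < 0 → f = 0)

/-!
Suppose a polynomial row vector lies in the row space of `G` at every `v ≠ 0`, where `G` is
fibrewise surjective. Then it is a polynomial combination of the rows of `G`: the multipliers that
bring it into the row module form an ideal whose only possible zero is the origin, so by the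
Nullstellensatz this ideal contains two relatively prime elements, and these can be cancelled.

Hence a constant row `c` supported on `{j | b j ≤ 0}` with `c F = 0` is of the form `h G`. At the
origin the relevant entries of `G`, of degree `a i - b j > 0`, vanish, so `c = 0`. The constant
matrix of `O^{n-r} → ⊕_{b j ≤ 0} O(b j)` thus has independent rows, which shows that at most `n - r`
of the `b j` are `≤ 0` and that none is negative. If exactly `n - r` of them are `≤ 0`, this matrix
is invertible, so `G` restricts to a fibrewise isomorphism on `⊕_{b j > 0} O(b j)`. The determinant
of this restriction is a nonzero constant, and a term of its expansion that is nonzero at the origin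
matches the positive `b j` with the `a i`.
-/

open Function (Injective Surjective extend)
open Matrix

section Matrix

variable {ι κ μ : Type*}

section Extend

variable {p α : Type*} [NonUnitalCommSemiring α] [Fintype ι] [Fintype p] {f : p → ι}

theorem extend_vecMul (hf : Injective f) (c : p → α) (M : Matrix ι κ α) :
    extend f c (0 : ι → α) ᵥ* M = c ᵥ* M.submatrix f id := by
  ext j
  refine (Fintype.sum_of_injective f hf _ _ (fun i hi => ?_) fun i => ?_).symm
  · simp [Function.extend_apply' c (0 : ι → α) i hi]
  · simp [hf.extend_apply]

theorem mulVec_extend (hf : Injective f) (M : Matrix κ ι α) (x : p → α) :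
    M *ᵥ extend f x (0 : ι → α) = M.submatrix id f *ᵥ x := by
  rw [← vecMul_transpose, extend_vecMul hf, ← transpose_submatrix, vecMul_transpose]

end Extend

variable {R : Type*} [CommRing R]

theorem exists_vecMul_eq_of_vecMul_eq_zero [Fintype ι] [Fintype κ] [Fintype μ]
    {F : Matrix ι κ R} {G : Matrix μ ι R} (hG : Surjective G.mulVec)
    (hFG : ∀ x, G *ᵥ x = 0 → ∃ y, F *ᵥ y = x) {c : ι → R} (hc : c ᵥ* F = 0) :
    ∃ h, h ᵥ* G = c := by
  classical
  obtain ⟨S, hS⟩ := mulVec_surjective_iff_exists_right_inverse.1 hG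
  refine ⟨c ᵥ* S, dotProduct_eq _ _ fun x => ?_⟩
  obtain ⟨y, hy⟩ := hFG (x - S *ᵥ G *ᵥ x) (by simp [mulVec_sub, ← Matrix.mul_assoc, hS])
  have hcx : c ⬝ᵥ (x - S *ᵥ G *ᵥ x) = 0 := by
    rw [← hy, dotProduct_mulVec, hc, zero_dotProduct]
  rw [← dotProduct_mulVec, ← dotProduct_mulVec, eq_comm, ← sub_eq_zero, ← dotProduct_sub, hcx]

theorem vecMul_vecMul_adjugate_vecMul [Fintype ι] [Fintype μ] [DecidableEq μ] (h : μ → R)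
    (G : Matrix μ ι R) (S : Matrix ι μ R) :
    h ᵥ* G ᵥ* S ᵥ* (G * S).adjugate ᵥ* G = (G * S).det • (h ᵥ* G) := by
  rw [vecMul_vecMul h, vecMul_vecMul h, mul_adjugate, vecMul_smul, vecMul_one, smul_vecMul]

theorem exists_perm_forall_apply_ne_zero [Fintype μ] [DecidableEq μ] {M : Matrix μ μ R}
    (hM : M.det ≠ 0) : ∃ σ : Equiv.Perm μ, ∀ i, M (σ i) i ≠ 0 := by
  contrapose! hM
  rw [det_apply]
  refine Finset.sum_eq_zero fun σ _ => ?_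
  obtain ⟨i, hi⟩ := hM σ
  exact smul_eq_zero_of_right _ (Finset.prod_eq_zero (Finset.mem_univ i) hi)

theorem mulVec_injective_of_vecMul_injective_of_card_eq {K : Type*} [Field K] [Fintype ι]
    [Fintype κ] {A : Matrix ι κ K} (hcard : Fintype.card ι = Fintype.card κ)
    (hA : Injective A.vecMul) :
    Injective A.mulVec := by
  have hsurj : Surjective A.vecMulLinear :=
    (LinearMap.injective_iff_surjective_of_finrank_eq_finrank (by simpa using hcard)).1 hA
  rw [← coe_mulVecLin, injective_iff_map_eq_zero]
  refine fun y hy => dotProduct_eq_zero _ fun d => ?_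
  obtain ⟨c, rfl⟩ := hsurj d
  rw [vecMulLinear_apply, dotProduct_comm, ← dotProduct_mulVec, ← mulVecLin_apply, hy,
    dotProduct_zero]

theorem mem_range_of_smul_mem_range_of_isRelPrime [IsDomain R] [DecompositionMonoid R] {N : Type*}
    [AddCommGroup N] [Module R N] [Module.IsTorsionFree R N] {φ : (μ → R) →ₗ[R] N}
    (hφ : Injective φ) {x y : R} (hx : x ≠ 0) (hxy : IsRelPrime x y) {c : N}
    (hxc : x • c ∈ LinearMap.range φ) (hyc : y • c ∈ LinearMap.range φ) :
    c ∈ LinearMap.range φ := by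
  obtain ⟨u, hu⟩ := hxc
  obtain ⟨w, hw⟩ := hyc
  have huw : y • u = x • w := hφ (by rw [map_smul, map_smul, hu, hw, smul_comm])
  have hdvd (i : μ) : x ∣ u i := hxy.dvd_of_dvd_mul_left ⟨w i, congrFun huw i⟩
  choose h hh using hdvd
  refine ⟨h, smul_right_injective N hx ?_⟩
  change x • φ h = x • c
  rw [← map_smul, ← hu]
  exact congrArg φ (funext hh).symm

end Matrix

section PuncturedSpace

variable {ι κ μ σ : Type*}

theorem map_eval_comp_vecMul {k : Type*} [CommSemiring k] [Fintype ι] (v : σ → k)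
    (c : ι → MvPolynomial σ k) (M : Matrix ι κ (MvPolynomial σ k)) :
    eval v ∘ (c ᵥ* M) = (eval v ∘ c) ᵥ* M.map (eval v) := by
  ext j
  exact (eval v).map_vecMul M c j

section IsDomain

variable {k : Type*} [CommRing k] [IsDomain k] [Infinite k] [Nonempty σ]

theorem eq_of_eval_eq_of_ne_zero {f g : MvPolynomial σ k} (h : ∀ v ≠ 0, eval v f = eval v g) :
    f = g := by
  obtain ⟨s⟩ := ‹Nonempty σ›
  refine mul_left_cancel₀ (X_ne_zero s) (MvPolynomial.funext fun v => ?_)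
  by_cases hv : v = 0
  · simp [hv]
  · simp [h v hv]

theorem vecMulLinear_injective_of_forall_ne_zero [Fintype μ] [Fintype ι]
    {G : Matrix μ ι (MvPolynomial σ k)} (hG : ∀ v ≠ 0, Surjective (G.map (eval v)).mulVec) :
    Injective G.vecMulLinear := by
  classical
  rw [injective_iff_map_eq_zero]
  intro u hu
  funext i
  refine eq_of_eval_eq_of_ne_zero fun v hv => ?_
  obtain ⟨S, hS⟩ := mulVec_surjective_iff_exists_right_inverse.1 (hG v hv)
  have huG : (eval v ∘ u) ᵥ* G.map (eval v) = 0 := by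
    rw [← map_eval_comp_vecMul, ← vecMulLinear_apply, hu]
    ext; simp
  have huS : (eval v ∘ u) ᵥ* G.map (eval v) ᵥ* S = eval v ∘ u := by
    rw [vecMul_vecMul, hS, vecMul_one]
  rw [huG, zero_vecMul] at huS
  simpa using (congrFun huS i).symm

theorem det_smul_mem_range_vecMulLinear [Fintype μ] [DecidableEq μ] [Fintype ι]
    {G : Matrix μ ι (MvPolynomial σ k)} {c : ι → MvPolynomial σ k}
    (hc : ∀ v ≠ 0, ∃ h, h ᵥ* G.map (eval v) = eval v ∘ c) (S : Matrix ι μ (MvPolynomial σ k)) :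
    (G * S).det • c ∈ LinearMap.range G.vecMulLinear := by
  refine ⟨c ᵥ* S ᵥ* (G * S).adjugate, ?_⟩
  funext j
  refine eq_of_eval_eq_of_ne_zero fun v hv => ?_
  suffices hfiber : eval v ∘ (c ᵥ* S ᵥ* (G * S).adjugate ᵥ* G) =
      eval v (G * S).det • (eval v ∘ c) by simpa using congrFun hfiber j
  obtain ⟨h, hh⟩ := hc v hv
  have hadj : (G * S).adjugate.map (eval v) = (G.map (eval v) * S.map (eval v)).adjugate := by
    rw [← Matrix.map_mul]
    exact (eval v).map_adjugate _
  have hdet : eval v (G * S).det = (G.map (eval v) * S.map (eval v)).det := by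
    rw [← Matrix.map_mul]
    exact (eval v).map_det _
  rw [map_eval_comp_vecMul, map_eval_comp_vecMul, map_eval_comp_vecMul, hadj, hdet, ← hh,
    vecMul_vecMul_adjugate_vecMul]

end IsDomain

variable {k : Type*} [Field k] [IsAlgClosed k] [Finite σ] [Nontrivial σ]

theorem exists_isRelPrime_mem_of_zeroLocus_subset {I : Ideal (MvPolynomial σ k)}
    (hI : zeroLocus k I ⊆ {0}) : ∃ f ∈ I, ∃ g ∈ I, f ≠ 0 ∧ IsRelPrime f g := by
  have hX (s : σ) : X s ∈ I.radical := by
    rw [← vanishingIdeal_zeroLocus_eq_radical (K := k)]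
    intro v hv
    obtain rfl : v = 0 := hI hv
    simp
  obtain ⟨s, t, hst⟩ := exists_pair_ne σ
  obtain ⟨m, hm⟩ := hX s
  obtain ⟨n, hn⟩ := hX t
  have hrel : IsRelPrime (X s : MvPolynomial σ k) (X t) :=
    X_prime.irreducible.isRelPrime_iff_not_dvd.2 (mt X_dvd_X.1 hst)
  exact ⟨_, hm, _, hn, pow_ne_zero m (X_ne_zero s), hrel.pow⟩

theorem isUnit_of_eval_ne_zero {f : MvPolynomial σ k} (hf : ∀ v ≠ 0, eval v f ≠ 0) :
    IsUnit f := by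
  have hloc : zeroLocus k (Ideal.span {f}) ⊆ {0} := fun v hv => by
    by_contra hv0
    exact hf v hv0 (hv f (Ideal.mem_span_singleton_self f))
  obtain ⟨g, hg, g', hg', -, hrel⟩ := exists_isRelPrime_mem_of_zeroLocus_subset hloc
  exact hrel (Ideal.mem_span_singleton.1 hg) (Ideal.mem_span_singleton.1 hg')

variable [Fintype μ] [Fintype ι] {G : Matrix μ ι (MvPolynomial σ k)}

theorem mem_range_vecMulLinear_of_forall_ne_zero
    (hG : ∀ v ≠ 0, Surjective (G.map (eval v)).mulVec) {c : ι → MvPolynomial σ k}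
    (hc : ∀ v ≠ 0, ∃ h, h ᵥ* G.map (eval v) = eval v ∘ c) :
    c ∈ LinearMap.range G.vecMulLinear := by
  classical
  have : Infinite k := IsAlgClosed.instInfinite
  let I : Ideal (MvPolynomial σ k) :=
    (LinearMap.range G.vecMulLinear).comap (LinearMap.toSpanSingleton _ _ c)
  have hI : zeroLocus k I ⊆ {0} := fun v hv => by
    by_contra hv0
    obtain ⟨S, hS⟩ := mulVec_surjective_iff_exists_right_inverse.1 (hG v hv0)
    let S' : Matrix ι μ (MvPolynomial σ k) := S.map C
    have hS' : S'.map (eval v) = S := by ext; simp [S']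
    have hdet : eval v (G * S').det = 1 := by
      rw [RingHom.map_det, RingHom.mapMatrix_apply, Matrix.map_mul, hS', hS, det_one]
    exact one_ne_zero (hdet.symm.trans (hv _ (det_smul_mem_range_vecMulLinear hc _)))
  obtain ⟨f, hf, g, hg, hf0, hfg⟩ := exists_isRelPrime_mem_of_zeroLocus_subset hI
  exact mem_range_of_smul_mem_range_of_isRelPrime (vecMulLinear_injective_of_forall_ne_zero hG)
    hf0 hfg hf hg

theorem exists_vecMul_eq_of_forall_ne_zero [Fintype κ] {F : Matrix ι κ (MvPolynomial σ k)}
    (hG : ∀ v ≠ 0, Surjective (G.map (eval v)).mulVec)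
    (hFG : ∀ v ≠ 0, ∀ x, G.map (eval v) *ᵥ x = 0 → ∃ y, F.map (eval v) *ᵥ y = x)
    {c : ι → MvPolynomial σ k} (hc : c ᵥ* F = 0) : ∃ h, h ᵥ* G = c :=
  mem_range_vecMulLinear_of_forall_ne_zero hG fun v hv =>
    exists_vecMul_eq_of_vecMul_eq_zero (hG v hv) (hFG v hv) (by
      rw [← map_eval_comp_vecMul, hc]
      ext; simp)

end PuncturedSpace

section IsHomDeg

variable {k : Type*} [CommSemiring k] {d : ℤ} {f : MvPolynomial (Fin 2) k}

theorem IsHomDeg.eval_zero_eq_zero (hf : IsHomDeg d f) (hd : d ≠ 0) : eval 0 f = 0 := by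
  rcases hd.lt_or_gt with h | h
  · rw [hf.2 h, map_zero]
  · rw [MvPolynomial.eval_zero, constantCoeff_eq]
    refine (hf.1 h.le).coeff_eq_zero ?_
    simp only [map_zero]
    omega

theorem IsHomDeg.C_eval_zero (hf : IsHomDeg d f) (hd : d ≤ 0) : C (eval 0 f) = f := by
  rcases hd.lt_or_eq with h | rfl
  · simp [hf.2 h]
  · have hconst := hf.1 le_rfl
    rw [Int.toNat_zero, ← totalDegree_zero_iff_isHomogeneous, totalDegree_eq_zero_iff_eq_C]
      at hconst
    rw [hconst, eval_C]

end IsHomDeg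

theorem map_univ_val_eq_replicate_add_map {ι μ α : Type*} [Fintype ι] [Fintype μ] {p : ι → Prop}
    [DecidablePred p] {b : ι → α} {a : μ → α} {c : α} (hc : ∀ j, ¬ p j → b j = c)
    (e : {j // p j} ≃ μ) (he : ∀ j : {j // p j}, b j = a (e j)) :
    Multiset.map b Finset.univ.val =
      Multiset.replicate (Fintype.card {j // ¬ p j}) c + Multiset.map a Finset.univ.val := by
  have hpos : Multiset.map (fun j : {j // p j} => b j) Finset.univ.val =
      Multiset.map a Finset.univ.val := by
    simp only [he, ← Multiset.map_univ_val_equiv e, Multiset.map_map, Function.comp_def]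
  have hneg : Multiset.map (fun j : {j // ¬ p j} => b j) Finset.univ.val =
      Multiset.replicate (Fintype.card {j // ¬ p j}) c := by
    simp only [fun j : {j // ¬ p j} => hc j j.2, Multiset.map_const', Finset.card_val,
      Finset.card_univ]
  rw [← hpos, ← hneg, ← Multiset.map_univ_val_equiv (Equiv.sumCompl p), Multiset.map_map,
    ← Finset.univ_disjSum_univ, Finset.val_disjSum, Multiset.disjSum, Multiset.map_add,
    Multiset.map_map, Multiset.map_map, add_comm]
  rfl

section Blocks

variable {ι κ μ k : Type*}

/-- The component `O^κ → ⊕_{b j ≤ 0} O(b j)` of a bundle map `F : O^κ → ⊕ O(b j)`. Its entries are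
constant, so it is encoded by their values at the origin. -/
noncomputable def nonposBlock [CommSemiring k] (b : ι → ℤ)
    (F : Matrix ι κ (MvPolynomial (Fin 2) k)) : Matrix {j // ¬ 0 < b j} κ k :=
  (F.map (eval 0)).submatrix Subtype.val id

/-- The restriction of a bundle map `G` out of `⊕ O(b j)` to the positive part
`⊕_{b j > 0} O(b j)`. -/
def posBlock {α : Type*} (b : ι → ℤ) (G : Matrix μ ι α) : Matrix μ {j // 0 < b j} α :=
  G.submatrix id Subtype.val

variable [CommRing k] {b : ι → ℤ} {F : Matrix ι κ (MvPolynomial (Fin 2) k)}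

theorem map_C_nonposBlock (hF : ∀ i j, IsHomDeg (b i) (F i j)) :
    (nonposBlock b F).map C = F.submatrix Subtype.val id := by
  ext1 i j
  exact (hF i j).C_eval_zero (not_lt.1 i.2)

theorem submatrix_map_eval_eq_nonposBlock (hF : ∀ i j, IsHomDeg (b i) (F i j)) (v : Fin 2 → k) :
    (F.map (eval v)).submatrix Subtype.val id = nonposBlock b F := by
  rw [submatrix_map, ← map_C_nonposBlock hF]
  ext; simp

theorem nonneg_of_nonposBlock_vecMul_injective [Nontrivial k] [Fintype ι]
    (hF : ∀ i j, IsHomDeg (b i) (F i j)) (hA : Injective (nonposBlock b F).vecMul) (j : ι) :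
    0 ≤ b j := by
  classical
  by_contra! hj
  have hrow : Pi.single ⟨j, hj.not_gt⟩ 1 ᵥ* nonposBlock b F = 0 ᵥ* nonposBlock b F := by
    ext i
    simp [nonposBlock, (hF j i).2 hj]
  simpa using congrFun (hA hrow) ⟨j, hj.not_gt⟩

theorem posBlock_map_eval_mulVec_injective [Fintype ι] [Fintype κ]
    {G : Matrix μ ι (MvPolynomial (Fin 2) k)} (hF : ∀ i j, IsHomDeg (b i) (F i j))
    (hA : Injective (nonposBlock b F).mulVec) {v : Fin 2 → k}
    (hexact : ∀ x, G.map (eval v) *ᵥ x = 0 → ∃ y, F.map (eval v) *ᵥ y = x) :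
    Injective ((posBlock b G).map (eval v)).mulVec := by
  refine (injective_iff_map_eq_zero ((posBlock b G).map (eval v)).mulVecLin).2 fun x hx => ?_
  obtain ⟨y, hy⟩ := hexact (extend Subtype.val x 0) (by
    rw [mulVec_extend Subtype.val_injective]
    exact hx)
  have hAy : nonposBlock b F *ᵥ y = 0 := by
    rw [← submatrix_map_eval_eq_nonposBlock hF v]
    funext j
    refine (congrFun hy j).trans (Function.extend_apply' _ _ _ ?_)
    rintro ⟨l, hl⟩
    exact j.2 (hl ▸ l.2)
  obtain rfl : y = 0 := hA (hAy.trans (mulVec_zero _).symm)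
  funext l
  rw [← Subtype.val_injective.extend_apply x 0 l, ← hy, mulVec_zero]
  rfl

end Blocks

section SplittingType

variable {ι κ μ k : Type*} [Field k] [IsAlgClosed k] [Fintype ι] {a : μ → ℤ}
  {b : ι → ℤ} {G : Matrix μ ι (MvPolynomial (Fin 2) k)}

theorem nonposBlock_vecMul_injective [Finite μ] [Fintype κ]
    {F : Matrix ι κ (MvPolynomial (Fin 2) k)}
    (ha : ∀ i, 0 < a i) (hF : ∀ i j, IsHomDeg (b i) (F i j))
    (hG : ∀ i j, IsHomDeg (a i - b j) (G i j))
    (hsurj : ∀ v ≠ 0, Surjective (G.map (eval v)).mulVec)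
    (hexact : ∀ v ≠ 0, ∀ x, G.map (eval v) *ᵥ x = 0 → ∃ y, F.map (eval v) *ᵥ y = x) :
    Injective (nonposBlock b F).vecMul := by
  have := Fintype.ofFinite μ
  refine (injective_iff_map_eq_zero (nonposBlock b F).vecMulLinear).2 fun c hc => ?_
  have hcF : extend Subtype.val (C ∘ c) (0 : ι → MvPolynomial (Fin 2) k) ᵥ* F = 0 := by
    rw [extend_vecMul Subtype.val_injective, ← map_C_nonposBlock hF]
    ext1 i
    rw [← RingHom.map_vecMul, ← vecMulLinear_apply, hc]
    exact map_zero C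
  obtain ⟨h, hh⟩ := exists_vecMul_eq_of_forall_ne_zero hsurj hexact hcF
  funext j
  have hG0 (i : μ) : eval 0 (G i j) = 0 :=
    (hG i j).eval_zero_eq_zero (by linarith [ha i, not_lt.1 j.2])
  calc c j = eval 0 (extend Subtype.val (C ∘ c) (0 : ι → MvPolynomial (Fin 2) k) j) := by
        rw [Subtype.val_injective.extend_apply, Function.comp_apply, eval_C]
    _ = eval 0 (∑ i, h i * G i j) := by rw [← hh]; rfl
    _ = 0 := by simp only [map_sum, map_mul, hG0, mul_zero, Finset.sum_const_zero]

theorem exists_equiv_of_map_eval_mulVec_injective [Fintype μ]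
    (hcard : Fintype.card ι = Fintype.card μ)
    (hdeg : ∀ i j, IsHomDeg (a i - b j) (G i j))
    (hG : ∀ v ≠ 0, Injective (G.map (eval v)).mulVec) : ∃ e : ι ≃ μ, ∀ j, b j = a (e j) := by
  classical
  let e₀ : ι ≃ μ := Fintype.equivOfCardEq hcard
  let B : Matrix μ μ (MvPolynomial (Fin 2) k) := G.submatrix id e₀.symm
  have hdet (v : Fin 2 → k) : eval v B.det = (B.map (eval v)).det := (eval v).map_det _
  have hunit : IsUnit B.det := isUnit_of_eval_ne_zero fun v hv => by
    have hB : Injective (B.map (eval v)).mulVec := by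
      have hcomp : (B.map (eval v)).mulVec = (G.map (eval v)).mulVec ∘ (· ∘ e₀) := by
        funext x
        exact submatrix_mulVec_equiv (G.map (eval v)) x id e₀.symm
      rw [hcomp]
      exact (hG v hv).comp e₀.surjective.injective_comp_right
    rw [hdet]
    exact ((isUnit_iff_isUnit_det _).1 (mulVec_injective_iff_isUnit.1 hB)).ne_zero
  obtain ⟨σ, hσ⟩ := exists_perm_forall_apply_ne_zero
    (hdet 0 ▸ (hunit.map (eval (0 : Fin 2 → k))).ne_zero)
  have hba (i : μ) : b (e₀.symm i) = a (σ i) := by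
    by_contra hne
    exact hσ i ((hdeg _ _).eval_zero_eq_zero (sub_ne_zero.2 (Ne.symm hne)))
  exact ⟨e₀.trans σ, fun j => by simpa using hba (e₀ j)⟩

end SplittingType

/-- Given a short exact sequence `0 → O^{n-r} → E → ⊕_{i=1}^r O(a_i) → 0` on `P¹` with all
`a_i > 0` (encoded fiberwise), write `E ≅ ⊕ O(b_j)` and let `r'` be the number of `j` with
`b_j > 0`. Then either `r' > r`, or `r' = r` and the sequence splits, i.e.
`E ≅ O^{n-r} ⊕ (⊕ O(a_i))` (equality of splitting types as multisets). -/
theorem stmt_6 {k : Type*} [Field k] [IsAlgClosed k] (n r : ℕ) (hrn : r ≤ n)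
    (b : Fin n → ℤ) (a : Fin r → ℤ) (ha : ∀ i, 0 < a i)
    (F : Fin n → Fin (n - r) → MvPolynomial (Fin 2) k)
    (G : Fin r → Fin n → MvPolynomial (Fin 2) k)
    (hF : ∀ i j, IsHomDeg (b i) (F i j))
    (hG : ∀ i j, IsHomDeg (a i - b j) (G i j))
    (hexact : ∀ v : Fin 2 → k, v ≠ 0 →
      Function.Injective ((Matrix.of fun i j => eval v (F i j)).mulVecLin) ∧
      Function.Surjective ((Matrix.of fun i j => eval v (G i j)).mulVecLin) ∧
      LinearMap.range ((Matrix.of fun i j => eval v (F i j)).mulVecLin) =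
        LinearMap.ker ((Matrix.of fun i j => eval v (G i j)).mulVecLin)) :
    r < (Finset.univ.filter fun j => 0 < b j).card ∨
    ((Finset.univ.filter fun j => 0 < b j).card = r ∧
      Multiset.map b Finset.univ.val =
        Multiset.replicate (n - r) 0 + Multiset.map a Finset.univ.val) := by
  have hsurj (v) (hv : v ≠ 0) : Surjective ((Matrix.of G).map (eval v)).mulVec := (hexact v hv).2.1
  have hker (v) (hv : v ≠ 0) (x) (hx : (Matrix.of G).map (eval v) *ᵥ x = 0) :
      ∃ y, (Matrix.of F).map (eval v) *ᵥ y = x := (hexact v hv).2.2.ge hx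
  have hA := nonposBlock_vecMul_injective ha hF hG hsurj hker
  have hnonpos : Fintype.card {j // ¬ 0 < b j} ≤ n - r := by
    simpa using LinearMap.finrank_le_finrank_of_injective
      (f := (nonposBlock b (Matrix.of F)).vecMulLinear) hA
  have hcard : Fintype.card {j // 0 < b j} + Fintype.card {j // ¬ 0 < b j} = n := by
    simpa using Fintype.card_congr (Equiv.sumCompl fun j => 0 < b j)
  rw [← Fintype.card_subtype]
  refine (lt_or_ge r (Fintype.card {j // 0 < b j})).imp_right fun hle => ?_
  have hr : Fintype.card {j // 0 < b j} = r := by omega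
  have hnr : Fintype.card {j // ¬ 0 < b j} = n - r := by omega
  have hA' := mulVec_injective_of_vecMul_injective_of_card_eq (by simpa using hnr) hA
  obtain ⟨e, he⟩ := exists_equiv_of_map_eval_mulVec_injective (b := fun j : {j // 0 < b j} => b j)
    (G := posBlock b (Matrix.of G)) (by simpa using hr) (fun i j => hG i j)
    fun v hv => posBlock_map_eval_mulVec_injective hF hA' (hker v hv)
  have hzero (j) (hj : ¬ 0 < b j) : b j = 0 :=
    (not_lt.1 hj).antisymm (nonneg_of_nonposBlock_vecMul_injective hF hA j)
  exact ⟨hr, hnr ▸ map_univ_val_eq_replicate_add_map hzero e he⟩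
end
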